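/- If S is a symmetric endomorphism of R^6 anti-commuting with J, then *(S⋆ψ⁻) = S⋆ψ⁺ and *(S⋆ψ⁺) = -S⋆ψ⁻, where * is the Hodge star associated to the standard metric and orientation. -/

import Mathlib

open Matrix

/-- `V = ℝ⁶` with its standard basis and inner product -/
abbrev V : Type := Fin 6 → ℝ

/-- the standard basis `e₁,…,e₆` (0-indexed) -/
def ee (i : Fin 6) : V := Pi.single i 1

/-- the standard complex structure `J(e_{2i-1}) = e_{2i}` -/
def Jf (X : V) : V := ![-X 1, X 0, -X 3, X 2, -X 5, X 4]

/-- a `k`-form on `V`, viewed as a function on `k`-tuples of vectors -/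
def Form (k : ℕ) := (Fin k → V) → ℝ

/-- the basis 3-form `e^{a+1,b+1,c+1}` -/
def f3 (a b c : Fin 6) : Form 3 := fun X =>
  Matrix.det !![X 0 a, X 0 b, X 0 c; X 1 a, X 1 b, X 1 c; X 2 a, X 2 b, X 2 c]

/-- `ψ⁺ = e^{135} - e^{146} - e^{236} - e^{245}` -/
def psiP : Form 3 := fun X => f3 0 2 4 X - f3 0 3 5 X - f3 1 2 5 X - f3 1 3 4 X

/-- `ψ⁻ = e^{136} + e^{145} + e^{235} - e^{246}` -/
def psiM : Form 3 := fun X => f3 0 2 5 X + f3 0 3 4 X + f3 1 2 4 X - f3 1 3 5 X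

/-- the fundamental 2-form `ω = e^{12} + e^{34} + e^{56}` -/
def om : Form 2 := fun X =>
  (X 0 0 * X 1 1 - X 0 1 * X 1 0) + (X 0 2 * X 1 3 - X 0 3 * X 1 2) +
    (X 0 4 * X 1 5 - X 0 5 * X 1 4)

/-- the volume form `dv = (1/6)ω³ = e^{123456}` -/
def dvol : Form 6 := fun X => Matrix.det (Matrix.of fun i j => X i j)

/-- the Hodge star operator on 3-forms, characterized in the orthonormal basis `eᵢ` by
`(*u)(X₁,X₂,X₃) = (1/3!) Σ_f u(e_{f(1)},e_{f(2)},e_{f(3)}) dv(e_{f(1)},e_{f(2)},e_{f(3)},X₁,X₂,X₃)`,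
i.e. by `a ∧ *b = ⟨a,b⟩ dv`. -/
noncomputable def hodge3 (u : Form 3) : Form 3 := fun X =>
  (∑ f : Fin 3 → Fin 6, u (fun i => ee (f i)) *
    dvol (Fin.append (fun i => ee (f i)) X)) / (Nat.factorial 3)

/-- the matrix of the standard complex structure -/
def Jm : Matrix (Fin 6) (Fin 6) ℝ :=
  !![0,-1,0,0,0,0; 1,0,0,0,0,0; 0,0,0,-1,0,0; 0,0,1,0,0,0; 0,0,0,0,0,-1; 0,0,0,0,1,0]

/-- the action `A⋆u` of an endomorphism `A` on a 3-form `u`: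
`(A⋆u)(X,Y,Z) = -u(AX,Y,Z) - u(X,AY,Z) - u(X,Y,AZ)` -/
def act (A : Matrix (Fin 6) (Fin 6) ℝ) (u : Form 3) : Form 3 := fun X =>
  -(u ![A.mulVec (X 0), X 1, X 2] + u ![X 0, A.mulVec (X 1), X 2] +
    u ![X 0, X 1, A.mulVec (X 2)])

def comb (c : Fin 20 → ℝ) : Form 3 := fun X =>
    c 0 * f3 0 1 2 X +
    c 1 * f3 0 1 3 X +
    c 2 * f3 0 1 4 X +
    c 3 * f3 0 1 5 X +
    c 4 * f3 0 2 3 X +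
    c 5 * f3 0 2 4 X +
    c 6 * f3 0 2 5 X +
    c 7 * f3 0 3 4 X +
    c 8 * f3 0 3 5 X +
    c 9 * f3 0 4 5 X +
    c 10 * f3 1 2 3 X +
    c 11 * f3 1 2 4 X +
    c 12 * f3 1 2 5 X +
    c 13 * f3 1 3 4 X +
    c 14 * f3 1 3 5 X +
    c 15 * f3 1 4 5 X +
    c 16 * f3 2 3 4 X +
    c 17 * f3 2 3 5 X +
    c 18 * f3 2 4 5 X +
    c 19 * f3 3 4 5 X

def DD (X : Fin 3 → V) (a b c : Fin 6) : ℝ := dvol ![ee a, ee b, ee c, X 0, X 1, X 2]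

lemma DD_eq (X : Fin 3 → V) (f : Fin 3 → Fin 6) :
    dvol (Fin.append (fun i => ee (f i)) X) = DD X (f 0) (f 1) (f 2) := by
  unfold DD
  congr 1
  funext i
  fin_cases i <;> rfl

lemma DD_swap01 (X : Fin 3 → V) (a b c : Fin 6) : DD X b a c = - DD X a b c := by
  unfold DD dvol
  have h := Matrix.det_permute (Equiv.swap (0 : Fin 6) 1)
    (Matrix.of fun i j => (![ee a, ee b, ee c, X 0, X 1, X 2] : Fin 6 → V) i j)
  rw [Equiv.Perm.sign_swap (by decide)] at h
  simp only [Units.val_neg, Units.val_one, Int.cast_neg, Int.cast_one, neg_mul, one_mul] at h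
  rw [← h]
  congr 1
  ext i j
  fin_cases i <;> rfl

lemma DD_swap12 (X : Fin 3 → V) (a b c : Fin 6) : DD X a c b = - DD X a b c := by
  unfold DD dvol
  have h := Matrix.det_permute (Equiv.swap (1 : Fin 6) 2)
    (Matrix.of fun i j => (![ee a, ee b, ee c, X 0, X 1, X 2] : Fin 6 → V) i j)
  rw [Equiv.Perm.sign_swap (by decide)] at h
  simp only [Units.val_neg, Units.val_one, Int.cast_neg, Int.cast_one, neg_mul, one_mul] at h
  rw [← h]
  congr 1
  ext i j
  fin_cases i <;> rfl

lemma sum_fin3 (F : (Fin 3 → Fin 6) → ℝ) :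
    ∑ f : Fin 3 → Fin 6, F f = ∑ i, ∑ j, ∑ k, F ![i, j, k] := by
  rw [← (Fin.consEquiv (fun _ : Fin 3 => Fin 6)).sum_comp, Fintype.sum_prod_type]
  refine Finset.sum_congr rfl fun i _ => ?_
  rw [← (Fin.consEquiv (fun _ : Fin 2 => Fin 6)).sum_comp, Fintype.sum_prod_type]
  refine Finset.sum_congr rfl fun j _ => ?_
  rw [← (Fin.consEquiv (fun _ : Fin 1 => Fin 6)).sum_comp, Fintype.sum_prod_type]
  refine Finset.sum_congr rfl fun k _ => ?_
  rw [Fintype.sum_unique]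
  congr 1

lemma sum3_delta (G : Fin 6 → Fin 6 → Fin 6 → ℝ) (a b c : Fin 6) :
    ∑ i, ∑ j, ∑ k, (ee i a * ee j b * ee k c) * G i j k = G a b c := by
  simp [ee, Pi.single_apply, Finset.sum_ite_eq]

lemma hodge_f3 (a b c : Fin 6) (X : Fin 3 → V) : hodge3 (f3 a b c) X = DD X a b c := by
  unfold hodge3
  simp only [DD_eq]
  rw [sum_fin3]
  have h : ∀ i j k : Fin 6, f3 a b c (fun l => ee (![i, j, k] l)) *
      DD X (![i, j, k] 0) (![i, j, k] 1) (![i, j, k] 2) =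
      (ee i a * ee j b * ee k c) * DD X i j k - (ee i a * ee j c * ee k b) * DD X i j k
      - (ee i b * ee j a * ee k c) * DD X i j k + (ee i b * ee j c * ee k a) * DD X i j k
      + (ee i c * ee j a * ee k b) * DD X i j k - (ee i c * ee j b * ee k a) * DD X i j k := by
    intro i j k
    simp only [f3, Matrix.det_fin_three, Matrix.of_apply, Matrix.cons_val]
    ring
  simp only [h, Finset.sum_add_distrib, Finset.sum_sub_distrib, sum3_delta]
  rw [DD_swap12 X a b c, DD_swap01 X a b c, DD_swap12 X b a c, DD_swap01 X a c b,
    DD_swap01 X b c a, DD_swap12 X b a c, DD_swap12 X a b c, DD_swap01 X a b c]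
  norm_num [Nat.factorial]
  ring

lemma DD_012 (X : Fin 3 → V) : DD X 0 1 2 = f3 3 4 5 X := by
  simp [DD, dvol, f3, ee, Matrix.det_succ_row_zero, Fin.sum_univ_succ, Fin.succAbove, Pi.single_apply]
  try ring

lemma DD_013 (X : Fin 3 → V) : DD X 0 1 3 = -f3 2 4 5 X := by
  simp [DD, dvol, f3, ee, Matrix.det_succ_row_zero, Fin.sum_univ_succ, Fin.succAbove, Pi.single_apply]
  try ring

lemma DD_014 (X : Fin 3 → V) : DD X 0 1 4 = f3 2 3 5 X := by
  simp [DD, dvol, f3, ee, Matrix.det_succ_row_zero, Fin.sum_univ_succ, Fin.succAbove, Pi.single_apply]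
  try ring

lemma DD_015 (X : Fin 3 → V) : DD X 0 1 5 = -f3 2 3 4 X := by
  simp [DD, dvol, f3, ee, Matrix.det_succ_row_zero, Fin.sum_univ_succ, Fin.succAbove, Pi.single_apply]
  try ring

lemma DD_023 (X : Fin 3 → V) : DD X 0 2 3 = f3 1 4 5 X := by
  simp [DD, dvol, f3, ee, Matrix.det_succ_row_zero, Fin.sum_univ_succ, Fin.succAbove, Pi.single_apply]
  try ring

lemma DD_024 (X : Fin 3 → V) : DD X 0 2 4 = -f3 1 3 5 X := by
  simp [DD, dvol, f3, ee, Matrix.det_succ_row_zero, Fin.sum_univ_succ, Fin.succAbove, Pi.single_apply]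
  try ring

lemma DD_025 (X : Fin 3 → V) : DD X 0 2 5 = f3 1 3 4 X := by
  simp [DD, dvol, f3, ee, Matrix.det_succ_row_zero, Fin.sum_univ_succ, Fin.succAbove, Pi.single_apply]
  try ring

lemma DD_034 (X : Fin 3 → V) : DD X 0 3 4 = f3 1 2 5 X := by
  simp [DD, dvol, f3, ee, Matrix.det_succ_row_zero, Fin.sum_univ_succ, Fin.succAbove, Pi.single_apply]
  try ring

lemma DD_035 (X : Fin 3 → V) : DD X 0 3 5 = -f3 1 2 4 X := by
  simp [DD, dvol, f3, ee, Matrix.det_succ_row_zero, Fin.sum_univ_succ, Fin.succAbove, Pi.single_apply]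
  try ring

lemma DD_045 (X : Fin 3 → V) : DD X 0 4 5 = f3 1 2 3 X := by
  simp [DD, dvol, f3, ee, Matrix.det_succ_row_zero, Fin.sum_univ_succ, Fin.succAbove, Pi.single_apply]
  try ring

lemma DD_123 (X : Fin 3 → V) : DD X 1 2 3 = -f3 0 4 5 X := by
  simp [DD, dvol, f3, ee, Matrix.det_succ_row_zero, Fin.sum_univ_succ, Fin.succAbove, Pi.single_apply]
  try ring

lemma DD_124 (X : Fin 3 → V) : DD X 1 2 4 = f3 0 3 5 X := by
  simp [DD, dvol, f3, ee, Matrix.det_succ_row_zero, Fin.sum_univ_succ, Fin.succAbove, Pi.single_apply]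
  try ring

lemma DD_125 (X : Fin 3 → V) : DD X 1 2 5 = -f3 0 3 4 X := by
  simp [DD, dvol, f3, ee, Matrix.det_succ_row_zero, Fin.sum_univ_succ, Fin.succAbove, Pi.single_apply]
  try ring

lemma DD_134 (X : Fin 3 → V) : DD X 1 3 4 = -f3 0 2 5 X := by
  simp [DD, dvol, f3, ee, Matrix.det_succ_row_zero, Fin.sum_univ_succ, Fin.succAbove, Pi.single_apply]
  try ring

lemma DD_135 (X : Fin 3 → V) : DD X 1 3 5 = f3 0 2 4 X := by
  simp [DD, dvol, f3, ee, Matrix.det_succ_row_zero, Fin.sum_univ_succ, Fin.succAbove, Pi.single_apply]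
  try ring

lemma DD_145 (X : Fin 3 → V) : DD X 1 4 5 = -f3 0 2 3 X := by
  simp [DD, dvol, f3, ee, Matrix.det_succ_row_zero, Fin.sum_univ_succ, Fin.succAbove, Pi.single_apply]
  try ring

lemma DD_234 (X : Fin 3 → V) : DD X 2 3 4 = f3 0 1 5 X := by
  simp [DD, dvol, f3, ee, Matrix.det_succ_row_zero, Fin.sum_univ_succ, Fin.succAbove, Pi.single_apply]
  try ring

lemma DD_235 (X : Fin 3 → V) : DD X 2 3 5 = -f3 0 1 4 X := by
  simp [DD, dvol, f3, ee, Matrix.det_succ_row_zero, Fin.sum_univ_succ, Fin.succAbove, Pi.single_apply]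
  try ring

lemma DD_245 (X : Fin 3 → V) : DD X 2 4 5 = f3 0 1 3 X := by
  simp [DD, dvol, f3, ee, Matrix.det_succ_row_zero, Fin.sum_univ_succ, Fin.succAbove, Pi.single_apply]
  try ring

lemma DD_345 (X : Fin 3 → V) : DD X 3 4 5 = -f3 0 1 2 X := by
  simp [DD, dvol, f3, ee, Matrix.det_succ_row_zero, Fin.sum_univ_succ, Fin.succAbove, Pi.single_apply]
  try ring

lemma hodge_comb (c : Fin 20 → ℝ) : hodge3 (comb c) = comb ![-c 19, c 18, -c 17, c 16, -c 15, c 14, -c 13, -c 12, c 11, -c 10, c 9, -c 8, c 7, c 6, -c 5, c 4, -c 3, c 2, -c 1, c 0] := by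
  funext X
  have key : ∀ a b c, ∑ f : Fin 3 → Fin 6, f3 a b c (fun i => ee (f i)) *
      dvol (Fin.append (fun i => ee (f i)) X) = 6 * DD X a b c := by
    intro a b c
    rw [← hodge_f3]
    simp only [hodge3, Nat.factorial]
    norm_num
    ring
  simp only [hodge3, comb, add_mul, Finset.sum_add_distrib, mul_assoc, ← Finset.mul_sum, key,
    DD_012, DD_013, DD_014, DD_015, DD_023, DD_024, DD_025, DD_034, DD_035, DD_045, DD_123, DD_124, DD_125, DD_134, DD_135, DD_145, DD_234, DD_235, DD_245, DD_345, Matrix.cons_val, Nat.factorial]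
  norm_num
  ring

def SS (p0 p1 p2 p3 p4 p5 q0 q1 q2 q3 q4 q5 : ℝ) : Matrix (Fin 6) (Fin 6) ℝ :=
  !![p0, q0, p1, q1, p2, q2; q0, -p0, q1, -p1, q2, -p2; p1, q1, p3, q3, p4, q4; q1, -p1, q3, -p3, q4, -p4; p2, q2, p4, q4, p5, q5; q2, -p2, q4, -p4, q5, -p5]

set_option maxHeartbeats 4000000 in
lemma act_P (p0 p1 p2 p3 p4 p5 q0 q1 q2 q3 q4 q5 : ℝ) :
    act (SS p0 p1 p2 p3 p4 p5 q0 q1 q2 q3 q4 q5) psiP = comb ![2 * q2, 2 * p2, -2 * q1, -2 * p1, -2 * q4, -p0 - p3 - p5, -q5 + q3 + q0, -q3 + q5 + q0, p0 - p3 - p5, 2 * q4, -2 * p4, -q0 + q5 + q3, -p0 + p3 - p5, -p0 - p3 + p5, q0 + q3 + q5, 2 * p4, 2 * q1, 2 * p1, -2 * q2, -2 * p2] := by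
  funext X
  simp only [act, psiP, comb, SS, f3, Matrix.det_fin_three, Matrix.of_apply, Matrix.cons_val,
    Matrix.mulVec, dotProduct, Fin.sum_univ_six]
  ring

set_option maxHeartbeats 4000000 in
lemma act_M (p0 p1 p2 p3 p4 p5 q0 q1 q2 q3 q4 q5 : ℝ) :
    act (SS p0 p1 p2 p3 p4 p5 q0 q1 q2 q3 q4 q5) psiM = comb ![-2 * p2, 2 * q2, 2 * p1, -2 * q1, 2 * p4, -q5 - q3 - q0, -p0 - p3 + p5, -p0 + p3 - p5, -q3 - q5 + q0, -2 * p4, -2 * q4, p0 - p3 - p5, -q0 - q5 + q3, -q0 - q3 + q5, -p0 - p3 - p5, 2 * q4, -2 * p1, 2 * q1, 2 * p2, -2 * q2] := by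
  funext X
  simp only [act, psiM, comb, SS, f3, Matrix.det_fin_three, Matrix.of_apply, Matrix.cons_val,
    Matrix.mulVec, dotProduct, Fin.sum_univ_six]
  ring

lemma S_form (S : Matrix (Fin 6) (Fin 6) ℝ) (hsym : Sᵀ = S) (hanti : S * Jm = -(Jm * S)) :
    S = SS (S 0 0) (S 0 2) (S 0 4) (S 2 2) (S 2 4) (S 4 4)
      (S 0 1) (S 0 3) (S 0 5) (S 2 3) (S 2 5) (S 4 5) := by
  have hs : ∀ i j, S j i = S i j := fun i j => congrFun (congrFun hsym i) j
  have ha : ∀ i j, (S * Jm) i j = (-(Jm * S)) i j := fun i j => by rw [hanti]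
  simp only [Matrix.neg_apply, Matrix.mul_apply, Fin.sum_univ_six, Jm] at ha
  have h01 := ha 0 1
  have h03 := ha 0 3
  have h05 := ha 0 5
  have h23 := ha 2 3
  have h25 := ha 2 5
  have h45 := ha 4 5
  have g02 := ha 0 2
  have g04 := ha 0 4
  have g24 := ha 2 4
  simp at h01 h03 h05 h23 h25 h45 g02 g04 g24
  ext i j
  fin_cases i <;> fin_cases j <;> simp [SS] <;>
    linarith [hs 0 1, hs 0 2, hs 0 3, hs 0 4, hs 0 5, hs 1 2, hs 1 3, hs 1 4, hs 1 5,
      hs 2 3, hs 2 4, hs 2 5, hs 3 4, hs 3 5, hs 4 5]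

theorem stmt17 (S : Matrix (Fin 6) (Fin 6) ℝ) (hsym : Sᵀ = S)
    (hanti : S * Jm = -(Jm * S)) :
    hodge3 (act S psiM) = act S psiP ∧ hodge3 (act S psiP) = fun X => -act S psiM X := by 
  rw [S_form S hsym hanti, act_P, act_M, hodge_comb, hodge_comb]
  constructor
  · congr 1
    funext i
    fin_cases i <;> simp <;> ring
  · funext X
    simp only [comb, Matrix.cons_val]
    ring
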